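/- For every point t_0 ∈ ℤ^ν, the number of sets C ∈ 𝔅 with t_0 ∈ C is at most (4ν)^{2r−1}. -/

import Mathlib

open scoped BigOperators

/-- Points of the lattice ℤ^ν. -/
abbrev Pt (ν : ℕ) := Fin ν → ℤ

/-- The ℓ¹ distance on ℤ^ν: ‖s − t‖ = Σᵢ |sᵢ − tᵢ|. -/
def latDist {ν : ℕ} (s t : Pt ν) : ℕ := ∑ i, (s i - t i).natAbs

/-- A graph `(V, E)` with vertices in ℤ^ν is 1-connected if every edge joins two
vertices of `V` at distance 1 and the graph is connected. -/
def IsOneConnected {ν : ℕ} (V : Finset (Pt ν)) (E : Finset (Sym2 (Pt ν))) : Prop :=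
  (∀ e ∈ E, ∀ x ∈ e, x ∈ V) ∧
  (∀ x y : Pt ν, s(x, y) ∈ E → latDist x y = 1) ∧
  (∀ x ∈ V, ∀ y ∈ V, Relation.ReflTransGen (fun a b => s(a, b) ∈ E) x y)

/-- The size `S(B)` of a finite set `B ⊆ ℤ^ν`: the minimal number of edges of a
1-connected graph `(V, E)` with `B ⊆ V`. -/
noncomputable def lsize {ν : ℕ} (B : Finset (Pt ν)) : ℕ :=
  sInf {m | ∃ V E, IsOneConnected V E ∧ B ⊆ V ∧ E.card = m}

/-- The collection 𝔅 of finite subsets of ℤ^ν with 1 ≤ S(B) ≤ r. -/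
def Bfam (ν r : ℕ) : Set (Finset (Pt ν)) := {B | 1 ≤ lsize B ∧ lsize B ≤ r}

/-!
A connected graph with at most `r` edges has at most `r + 1` vertices, so it has a closed walk from
any of its vertices through all of them of length at most `2r`: each new vertex costs a detour of
two steps. The last step only returns to the start, so a set `C ∋ t₀` spanned by the graph is
recovered from the first `2r - 1` steps, each recording which neighbour is reached (at most `2ν`
choices) and whether it belongs to `C` (two choices).
-/

lemma encard_preimage_erase_le {α : Type*} [DecidableEq α] (a : α) (F : Set (Finset α)) :
    ((fun D : Finset α => D.erase a) ⁻¹' F).encard ≤ 2 * F.encard := by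
  have hsub : (fun D : Finset α => D.erase a) ⁻¹' F ⊆ F ∪ insert a '' F := by
    intro D hD
    by_cases ha : a ∈ D
    · exact .inr ⟨D.erase a, hD, Finset.insert_erase ha⟩
    · exact .inl (Finset.erase_eq_of_notMem ha ▸ hD)
  calc ((fun D : Finset α => D.erase a) ⁻¹' F).encard
      ≤ F.encard + (insert a '' F).encard :=
        (Set.encard_le_encard hsub).trans (Set.encard_union_le ..)
    _ ≤ F.encard + F.encard := add_le_add_right (Set.encard_image_le ..) _
    _ = 2 * F.encard := (two_mul _).symm

lemma encard_biUnion_le_mul {ι α : Type*} {t : Set ι} (ht : t.Finite) {s : ι → Set α} {c : ℕ∞}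
    (hs : ∀ i ∈ t, (s i).encard ≤ c) : (⋃ i ∈ t, s i).encard ≤ t.encard * c := by
  lift t to Finset ι using ht
  simp only [Finset.mem_coe] at hs ⊢
  calc (⋃ i ∈ t, s i).encard ≤ ∑ i ∈ t, (s i).encard := t.set_encard_biUnion_le s
    _ ≤ t.card • c := t.sum_le_card_nsmul _ c hs
    _ = (t : Set ι).encard * c := by rw [nsmul_eq_mul, Set.encard_coe_eq_coe_finsetCard]

section Walks

variable {α : Type*} {G : SimpleGraph α}

lemma exists_closed_walk_card_support_eq [DecidableEq α] (hG : G.Connected) (v : α) {k : ℕ}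
    (hk : k < ENat.card α) :
    ∃ p : G.Walk v v, p.length = 2 * k ∧ p.support.toFinset.card = k + 1 := by
  induction k with
  | zero => exact ⟨.nil, by simp⟩
  | succ k ih =>
    obtain ⟨p, hlen, hcard⟩ := ih ((Nat.cast_le.2 k.le_succ).trans_lt hk)
    obtain ⟨x, hx⟩ : ∃ x, x ∉ p.support := by
      by_contra! hall
      have huniv : (p.support.toFinset : Set α) = Set.univ := by
        ext x
        simpa using hall x
      rw [← Set.encard_univ, ← huniv, Set.encard_coe_eq_coe_finsetCard, hcard] at hk
      exact hk.false
    obtain ⟨q⟩ := hG.preconnected v x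
    obtain ⟨⟨⟨w, u⟩, hwu⟩, -, hw, hu⟩ :=
      q.exists_boundary_dart {x | x ∈ p.support} p.start_mem_support hx
    let detour : G.Walk w w := .cons hwu (.cons hwu.symm (p.rotate w hw))
    have hmem (y : α) : y ∈ detour.support ↔ y = u ∨ y ∈ p.support := by
      simp only [detour, SimpleGraph.Walk.support_cons, List.mem_cons,
        SimpleGraph.Walk.mem_support_rotate_iff]
      grind
    have hv : v ∈ detour.support := (hmem v).2 (.inr p.start_mem_support)
    have hinsert : (detour.rotate v hv).support.toFinset = insert u p.support.toFinset := by
      ext y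
      simp [hmem]
    refine ⟨detour.rotate v hv, ?_, ?_⟩
    · simp only [SimpleGraph.Walk.length_rotate, detour, SimpleGraph.Walk.length_cons, hlen]
      ring
    · rw [hinsert, Finset.card_insert_of_notMem (by simpa using hu), hcard]

lemma exists_closed_walk_forall_mem_support [Finite α] (hG : G.Connected) (v : α) :
    ∃ p : G.Walk v v, p.length = 2 * (Nat.card α - 1) ∧ ∀ x, x ∈ p.support := by
  classical
  have := Fintype.ofFinite α
  have hpos : 0 < Fintype.card α := Fintype.card_pos_iff.2 ⟨v⟩
  obtain ⟨p, hlen, hcard⟩ := exists_closed_walk_card_support_eq hG v (k := Fintype.card α - 1)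
    (by rw [ENat.card_eq_coe_fintype_card]; exact_mod_cast Nat.sub_one_lt hpos.ne')
  have huniv : p.support.toFinset = Finset.univ :=
    (Finset.card_eq_iff_eq_univ _).1 (by omega)
  exact ⟨p, by rw [hlen, Nat.card_eq_fintype_card],
    fun x => List.mem_toFinset.1 (huniv ▸ Finset.mem_univ x)⟩

lemma exists_closed_walk_of_subgraph_connected {H : G.Subgraph} (hfin : H.verts.Finite)
    (hH : H.Connected) {v : α} (hv : v ∈ H.verts) :
    ∃ p : G.Walk v v, p.length ≤ 2 * H.edgeSet.ncard ∧ ∀ x ∈ H.verts, x ∈ p.support := by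
  have : Finite H.verts := hfin
  obtain ⟨p, hlen, hp⟩ := exists_closed_walk_forall_mem_support hH.coe ⟨v, hv⟩
  have hcard : Nat.card H.coe.edgeSet = H.edgeSet.ncard := by
    rw [← H.image_coe_edgeSet_coe,
      Set.ncard_image_of_injective _ (Sym2.map.injective Subtype.val_injective),
      Nat.card_coe_set_eq]
  have hverts := hH.coe.card_vert_le_card_edgeSet_add_one
  refine ⟨p.map H.hom, (p.length_map H.hom).trans_le (by omega), fun x hx => ?_⟩
  exact (p.support_map H.hom).symm ▸ List.mem_map.2 ⟨⟨x, hx⟩, hp _, rfl⟩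

/-- The sets of vertices that can be marked along a walk in `G` of length at most `n` from `v`;
the starting point of the walk is not available for marking. -/
def markedSets (G : SimpleGraph α) (n : ℕ) (v : α) : Set (Finset α) :=
  {D | ∃ (w : α) (p : G.Walk v w), p.length ≤ n ∧ ∀ x ∈ D, x ∈ p.support.tail}

lemma markedSets_zero (v : α) : markedSets G 0 v = {∅} := by
  ext D
  constructor
  · rintro ⟨w, p, hp, hD⟩
    cases p with
    | nil => simpa [Finset.eq_empty_iff_forall_notMem] using hD
    | cons h q => simp at hp
  · rintro rfl
    exact ⟨v, .nil, by simp⟩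

lemma eq_empty_or_exists_erase_mem_markedSets [DecidableEq α] {n : ℕ} {v : α} {D : Finset α}
    (hD : D ∈ markedSets G (n + 1) v) :
    D = ∅ ∨ ∃ w ∈ G.neighborSet v, D.erase w ∈ markedSets G n w := by
  obtain ⟨u, p, hp, hDp⟩ := hD
  cases p with
  | nil => exact .inl (by simpa [Finset.eq_empty_iff_forall_notMem] using hDp)
  | @cons _ w _ h q =>
    refine .inr ⟨w, h, u, q, by simpa using hp, fun x hx => ?_⟩
    have hxq := hDp x (Finset.mem_of_mem_erase hx)
    rw [SimpleGraph.Walk.support_cons, List.tail_cons, ← q.cons_tail_support] at hxq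
    exact List.mem_of_ne_of_mem (Finset.ne_of_mem_erase hx) hxq

theorem encard_markedSets_le {d : ℕ} (hd : 1 ≤ d) (hG : ∀ v, (G.neighborSet v).encard ≤ d)
    (n : ℕ) (v : α) : (markedSets G n v).encard ≤ (2 * d) ^ n := by
  classical
  induction n generalizing v with
  | zero => simp [markedSets_zero]
  | succ n ih =>
    rcases (G.neighborSet v).eq_empty_or_nonempty with hv | hv
    · have hsub : markedSets G (n + 1) v ⊆ {∅} := fun D hD => by
        simpa [hv] using eq_empty_or_exists_erase_mem_markedSets hD
      calc (markedSets G (n + 1) v).encard ≤ 1 :=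
            (Set.encard_le_encard hsub).trans_eq (Set.encard_singleton _)
        _ ≤ (2 * d) ^ (n + 1) := by exact_mod_cast Nat.one_le_pow _ _ (by omega)
    · have hsub : markedSets G (n + 1) v ⊆
          ⋃ w ∈ G.neighborSet v, (fun D : Finset α => D.erase w) ⁻¹' markedSets G n w := by
        intro D hD
        rcases eq_empty_or_exists_erase_mem_markedSets hD with rfl | ⟨w, hw, hwD⟩
        · obtain ⟨w, hw⟩ := hv
          exact Set.mem_biUnion hw ⟨w, .nil, by simp⟩
        · exact Set.mem_biUnion hw hwD
      calc (markedSets G (n + 1) v).encard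
          ≤ (G.neighborSet v).encard * (2 * (2 * d) ^ n) :=
            (Set.encard_le_encard hsub).trans <|
              encard_biUnion_le_mul (Set.finite_of_encard_le_coe (hG v)) fun w _ =>
                (encard_preimage_erase_le w _).trans (by gcongr; exact ih w)
        _ ≤ d * (2 * (2 * d) ^ n) := by gcongr; exact hG v
        _ = (2 * d) ^ (n + 1) := by ring

/-- The analogue of `{C ∈ 𝔅 | v ∈ C}` in a graph `G`: the finite sets containing `v` whose size in
`G` is at most `r`, that is, which lie in a finite connected subgraph with at most `r` edges. -/
def spannedSets (G : SimpleGraph α) (r : ℕ) (v : α) : Set (Finset α) :=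
  {C | v ∈ C ∧ ∃ H : G.Subgraph,
    H.verts.Finite ∧ H.Connected ∧ (C : Set α) ⊆ H.verts ∧ H.edgeSet.ncard ≤ r}

lemma mem_tail_support_dropLast {u v x : α} {p : G.Walk u v} (hx : x ∈ p.support) (hxu : x ≠ u)
    (hxv : x ≠ v) : x ∈ p.dropLast.support.tail := by
  have hp : ¬ p.Nil := fun hnil =>
    hxu (by simpa [SimpleGraph.Walk.nil_iff_support_eq.1 hnil] using hx)
  rw [← SimpleGraph.Walk.support_dropLast_concat hp, List.mem_append, List.mem_singleton,
    ← p.dropLast.cons_tail_support, List.mem_cons] at hx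
  tauto

lemma erase_mem_markedSets_of_mem_spannedSets [DecidableEq α] {r : ℕ} {v : α} {C : Finset α}
    (hC : C ∈ spannedSets G r v) : C.erase v ∈ markedSets G (2 * r - 1) v := by
  obtain ⟨hv, H, hfin, hH, hCH, hr⟩ := hC
  obtain ⟨p, hlen, hp⟩ := exists_closed_walk_of_subgraph_connected hfin hH (hCH hv)
  refine ⟨_, p.dropLast, ?_, fun x hx => ?_⟩
  · rw [SimpleGraph.Walk.length_dropLast]
    omega
  · have hxv := Finset.ne_of_mem_erase hx
    exact mem_tail_support_dropLast (hp x (hCH (Finset.mem_of_mem_erase hx))) hxv hxv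

theorem card_Bfam_mem_le_general {d : ℕ} (hd : 1 ≤ d) (hG : ∀ v, (G.neighborSet v).encard ≤ d)
    (r : ℕ) (v : α) :
    (spannedSets G r v).Finite ∧ (spannedSets G r v).ncard ≤ (2 * d) ^ (2 * r - 1) := by
  classical
  refine Set.encard_le_coe_iff_finite_ncard_le.1 ?_
  calc (spannedSets G r v).encard
      ≤ (markedSets G (2 * r - 1) v).encard :=
        Set.encard_le_encard_of_injOn (fun _ => erase_mem_markedSets_of_mem_spannedSets)
          ((Finset.erase_injOn' v).mono fun _ hC => hC.1)
    _ ≤ ((2 * d) ^ (2 * r - 1) : ℕ) := by exact_mod_cast encard_markedSets_le hd hG _ v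

end Walks

section Lattice

variable {ν : ℕ}

lemma latDist_comm (s t : Pt ν) : latDist s t = latDist t s :=
  Finset.sum_congr rfl fun i _ => by rw [← Int.natAbs_neg, neg_sub]

/-- The graph on `ℤ^ν` whose edges join the points at distance 1. -/
def latticeGraph (ν : ℕ) : SimpleGraph (Pt ν) where
  Adj s t := latDist s t = 1
  symm := ⟨fun s t h => by rwa [latDist_comm]⟩
  loopless := ⟨fun s h => by simp [latDist] at h⟩

lemma exists_eq_add_single_of_latDist_eq_one {s t : Pt ν} (h : latDist s t = 1) :
    ∃ (i : Fin ν) (ε : ℤˣ), t = s + Pi.single i (ε : ℤ) := by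
  obtain ⟨i, hi⟩ := (Finsupp.sum_eq_one_iff
    (Finsupp.equivFunOnFinite.symm fun j => (s j - t j).natAbs)).1
      (by rwa [Finsupp.sum_fintype _ _ fun _ => rfl])
  have hcoord (j : Fin ν) : (s j - t j).natAbs = (Pi.single i 1 : Fin ν → ℕ) j := by
    rw [← Finsupp.single_eq_pi_single, ← hi]
    rfl
  have hunit : IsUnit (t i - s i) := by
    rw [Int.isUnit_iff_natAbs_eq, ← Int.natAbs_neg, neg_sub, hcoord, Pi.single_eq_same]
  refine ⟨i, hunit.unit, funext fun j => ?_⟩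
  obtain rfl | hj := eq_or_ne j i
  · simp
  · have hzero := hcoord j
    simp only [Pi.single_eq_of_ne hj, Int.natAbs_eq_zero] at hzero
    simp only [Pi.add_apply, Pi.single_eq_of_ne hj]
    omega

lemma encard_neighborSet_latticeGraph_le (s : Pt ν) :
    ((latticeGraph ν).neighborSet s).encard ≤ (2 * ν : ℕ) := by
  have hsub : (latticeGraph ν).neighborSet s ⊆
      (fun d : Fin ν × ℤˣ => s + Pi.single d.1 (d.2 : ℤ)) '' Set.univ := by
    intro t ht
    obtain ⟨i, ε, rfl⟩ := exists_eq_add_single_of_latDist_eq_one ht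
    exact ⟨(i, ε), trivial, rfl⟩
  calc ((latticeGraph ν).neighborSet s).encard
      ≤ (Set.univ : Set (Fin ν × ℤˣ)).encard :=
        (Set.encard_le_encard hsub).trans (Set.encard_image_le _ _)
    _ = (2 * ν : ℕ) := by simp [Set.encard_univ, mul_comm]

/-- The graph `(V, E)` as a subgraph of `latticeGraph ν`. -/
def IsOneConnected.toSubgraph {V : Finset (Pt ν)} {E : Finset (Sym2 (Pt ν))}
    (h : IsOneConnected V E) : (latticeGraph ν).Subgraph where
  verts := V
  Adj a b := s(a, b) ∈ E
  adj_sub := h.2.1 _ _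
  edge_vert hab := h.1 _ hab _ (Sym2.mem_mk_left _ _)
  symm := ⟨fun a b hab => by rwa [Sym2.eq_swap]⟩

lemma IsOneConnected.edgeSet_toSubgraph {V : Finset (Pt ν)} {E : Finset (Sym2 (Pt ν))}
    (h : IsOneConnected V E) : h.toSubgraph.edgeSet = E :=
  Set.ext fun e => e.ind fun _ _ => .rfl

lemma IsOneConnected.connected_toSubgraph {V : Finset (Pt ν)} {E : Finset (Sym2 (Pt ν))}
    (h : IsOneConnected V E) (hV : V.Nonempty) : h.toSubgraph.Connected := by
  have hreach {x y : Pt ν} (hx : x ∈ V) (hxy : Relation.ReflTransGen (fun a b => s(a, b) ∈ E) x y) :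
      ∃ hy : y ∈ V, h.toSubgraph.coe.Reachable ⟨x, hx⟩ ⟨y, hy⟩ := by
    induction hxy with
    | refl => exact ⟨hx, .rfl⟩
    | tail _ hbc ih =>
      obtain ⟨_, hxb⟩ := ih
      exact ⟨h.1 _ hbc _ (Sym2.mem_mk_right _ _), hxb.trans (SimpleGraph.Adj.reachable hbc)⟩
  have : Nonempty h.toSubgraph.verts := hV.to_subtype
  exact ⟨⟨fun x y => (hreach x.2 (h.2.2 _ x.2 _ y.2)).2⟩⟩

lemma exists_isOneConnected_card_eq_lsize {B : Finset (Pt ν)} (hB : 1 ≤ lsize B) :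
    ∃ V E, IsOneConnected V E ∧ B ⊆ V ∧ E.card = lsize B :=
  Nat.sInf_mem (Nat.nonempty_of_pos_sInf hB)

lemma setOf_mem_Bfam_subset_spannedSets (r : ℕ) (t : Pt ν) :
    {C | C ∈ Bfam ν r ∧ t ∈ C} ⊆ spannedSets (latticeGraph ν) r t := by
  rintro C ⟨hC, ht⟩
  obtain ⟨V, E, hVE, hCV, hE⟩ := exists_isOneConnected_card_eq_lsize hC.1
  refine ⟨ht, hVE.toSubgraph, V.finite_toSet, hVE.connected_toSubgraph ⟨t, hCV ht⟩, hCV, ?_⟩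
  rw [hVE.edgeSet_toSubgraph, Set.ncard_coe_finset, hE]
  exact hC.2

end Lattice

/-- For every point `t₀ ∈ ℤ^ν`, the number of sets `C ∈ 𝔅` with
`t₀ ∈ C` is at most `(4ν)^{2r−1}`. -/
theorem card_Bfam_mem_le {ν r : ℕ} (hν : 1 ≤ ν) (hr : 1 ≤ r) (t0 : Pt ν) :
    {C | C ∈ Bfam ν r ∧ t0 ∈ C}.Finite ∧
    {C | C ∈ Bfam ν r ∧ t0 ∈ C}.ncard ≤ (4 * ν) ^ (2 * r - 1) := by
  have ⟨hfin, hcard⟩ :=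
    card_Bfam_mem_le_general (by omega) encard_neighborSet_latticeGraph_le r t0
  have hsub := setOf_mem_Bfam_subset_spannedSets r t0
  exact ⟨hfin.subset hsub, (Set.ncard_le_ncard hsub hfin).trans (hcard.trans_eq (by ring))⟩
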